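/- Let a, b, c be pairwise coprime positive integers with c² = a² + b² + ab, let k be a positive integer, and let x be an integer with x > c² − a − b. Then the ideal trapezoid with shorter parallel side x and lateral sides k·ab tiles into k·(2x + k·ab) congruent copies of the triangle with side lengths (a, b, c). -/

import Mathlib

noncomputable section

abbrev Plane := EuclideanSpace ℝ (Fin 2)

/-- The point (x, y) in the Euclidean plane. -/
def pt (x y : ℝ) : Plane := (WithLp.equiv 2 (Fin 2 → ℝ)).symm ![x, y]

/-- `Δ` is a triangle with side lengths `(p, q, r)`: the convex hull of points `P, Q, R`
with `dist Q R = p`, `dist P R = q`, `dist P Q = r`. -/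
def IsTriangle (p q r : ℝ) (Δ : Set Plane) : Prop :=
  ∃ P Q R : Plane, dist Q R = p ∧ dist P R = q ∧ dist P Q = r ∧
    Δ = convexHull ℝ {P, Q, R}

/-- `S` tiles into `N` congruent copies of the `(p, q, r)` triangle: there are isometries
`f 1, …, f N` of the plane and a triangle `Δ` with side lengths `(p, q, r)` such that
`S` is the union of the `f i '' Δ` and their interiors are pairwise disjoint. -/
def TilesInto (S : Set Plane) (N : ℕ) (p q r : ℝ) : Prop :=
  ∃ (f : Fin N → Plane ≃ᵢ Plane) (Δ : Set Plane),
    IsTriangle p q r Δ ∧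
    S = ⋃ i, f i '' Δ ∧
    ∀ i j : Fin N, i ≠ j → interior (f i '' Δ) ∩ interior (f j '' Δ) = ∅

/-- The ideal trapezoid with shorter parallel side `x` and lateral sides `ℓ`
(longer parallel side `x + ℓ`, base angles `π/3`). -/
def IdealTrapezoid (x ℓ : ℝ) : Set Plane :=
  convexHull ℝ {pt 0 0, pt (x + ℓ) 0, pt (x + ℓ/2) (ℓ * Real.sqrt 3 / 2),
    pt (ℓ/2) (ℓ * Real.sqrt 3 / 2)}

def hx (X Y : ℝ) : Plane := pt (X + Y / 2) (Y * Real.sqrt 3 / 2)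

def reg (P u v : Plane) (A : ℝ → ℝ → Prop) : Set Plane :=
  {p | ∃ s t, A s t ∧ p = P + s • u + t • v}

def UT (s t : ℝ) : Prop := 0 ≤ s ∧ 0 ≤ t ∧ s + t ≤ 1

def IsTile (a b : ℝ) (T : Set Plane) : Prop :=
  ∃ R u v : Plane, inner ℝ u u = a ^ 2 ∧ inner ℝ v v = b ^ 2 ∧ inner ℝ u v = -(a * b / 2) ∧
    T = reg R u v UT

def Good (a b : ℝ) (S : Set Plane) (N : ℕ) : Prop :=
  ∃ (ι : Type) (_ : Fintype ι) (g : ι → Set Plane), Fintype.card ι = N ∧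
    (∀ i, IsTile a b (g i)) ∧ S = ⋃ i, g i ∧
    ∀ i j, i ≠ j → interior (g i) ∩ interior (g j) = ∅

def Fr (a b : ℝ) (u v : Plane) : Prop :=
  ((inner ℝ u u = a ^ 2 ∧ inner ℝ v v = b ^ 2) ∨ (inner ℝ u u = b ^ 2 ∧ inner ℝ v v = a ^ 2)) ∧
    inner ℝ u v = -(a * b / 2)

lemma inner_pt (x y x' y' : ℝ) : inner ℝ (pt x y) (pt x' y') = x * x' + y * y' := by
  simp [pt, PiLp.inner_apply, Fin.sum_univ_two]
  ring

lemma inner_hx (x y x' y' : ℝ) :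
    inner ℝ (hx x y) (hx x' y') = x * x' + (x * y' + x' * y) / 2 + y * y' := by
  have h3 : Real.sqrt 3 * Real.sqrt 3 = 3 := Real.mul_self_sqrt (by norm_num)
  rw [hx, hx, inner_pt]
  linear_combination (y * y' / 4) * h3

lemma pt_ext {p q : Plane} (h0 : p 0 = q 0) (h1 : p 1 = q 1) : p = q := by
  ext i
  fin_cases i
  · exact h0
  · exact h1

@[simp] lemma pt_0 (x y : ℝ) : pt x y 0 = x := by simp [pt]
@[simp] lemma pt_1 (x y : ℝ) : pt x y 1 = y := by simp [pt]

lemma hx_comb (p q s u1 u2 t v1 v2 : ℝ) :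
    hx p q + s • hx u1 u2 + t • hx v1 v2 = hx (p + s * u1 + t * v1) (q + s * u2 + t * v2) := by
  apply pt_ext
  · simp [hx]; ring
  · simp [hx]; ring

lemma Good.congr {a b : ℝ} {S S' : Set Plane} {N N' : ℕ} (h : Good a b S N) (hS : S' = S)
    (hN : N' = N) : Good a b S' N' := by
  subst hS; subst hN; exact h

lemma Good.union {a b : ℝ} {S S' : Set Plane} {N N' : ℕ} (h : Good a b S N) (h' : Good a b S' N')
    (hd : interior S ∩ interior S' = ∅) : Good a b (S ∪ S') (N + N') := by
  obtain ⟨ι, _, g, hc, ht, hu, hp⟩ := h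
  obtain ⟨ι', _, g', hc', ht', hu', hp'⟩ := h'
  have key : ∀ i j, interior (g i) ∩ interior (g' j) = ∅ := by
    intro i j
    apply Set.subset_empty_iff.1
    rw [← hd]
    apply Set.inter_subset_inter
    · apply interior_mono; rw [hu]; exact Set.subset_iUnion g i
    · apply interior_mono; rw [hu']; exact Set.subset_iUnion g' j
  refine ⟨ι ⊕ ι', inferInstance, Sum.elim g g', by simp [hc, hc'], ?_, ?_, ?_⟩
  · rintro (i | i)
    · exact ht i
    · exact ht' i
  · rw [hu, hu', Set.iUnion_sum]; rfl
  · rintro (i | i) (j | j) hij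
    · exact hp i j (fun h => hij (by rw [h]))
    · exact key i j
    · rw [Set.inter_comm]; exact key j i
    · exact hp' i j (fun h => hij (by rw [h]))

lemma interior_level (f : Plane →ₗ[ℝ] ℝ) (r : ℝ) (w : Plane) (hw : f w ≠ 0) :
    interior {p | f p = r} = ∅ := by
  have hs : Function.Surjective f := f.surjective (by rintro rfl; simp at hw)
  have ho : IsOpenMap f := f.isOpenMap_of_finiteDimensional hs
  have h1 : IsOpen (f '' interior {p | f p = r}) := ho _ isOpen_interior
  have h2 : f '' interior {p | f p = r} ⊆ {r} := by
    rintro _ ⟨p, hp, rfl⟩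
    exact (interior_subset hp : p ∈ {p | f p = r})
  have h3 := interior_maximal h2 h1
  rw [interior_singleton] at h3
  exact Set.image_eq_empty.1 (Set.subset_empty_iff.1 h3)

def ND (u v : Plane) : Prop := inner ℝ u u * inner ℝ v v - inner ℝ u v * inner ℝ u v ≠ (0:ℝ)

lemma Good.split {a b : ℝ} {P u v : Plane} (hnd : ND u v) {A : ℝ → ℝ → Prop} {N N' : ℕ}
    (α β r : ℝ) (hαβ : α ≠ 0 ∨ β ≠ 0)
    (h : Good a b (reg P u v (fun s t => A s t ∧ α * s + β * t ≤ r)) N)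
    (h' : Good a b (reg P u v (fun s t => A s t ∧ r ≤ α * s + β * t)) N') :
    Good a b (reg P u v A) (N + N') := by
  set D : ℝ := inner ℝ u u * inner ℝ v v - inner ℝ u v * inner ℝ u v with hD
  have hD0 : D ≠ 0 := hnd
  let f : Plane →ₗ[ℝ] ℝ := (1 / D) • ((α * inner ℝ v v - β * inner ℝ u v) • (innerₛₗ ℝ u) +
     (β * inner ℝ u u - α * inner ℝ u v) • (innerₛₗ ℝ v))
  have fu : f u = α := by
    simp only [f, LinearMap.smul_apply, LinearMap.add_apply, innerₛₗ_apply_apply, smul_eq_mul]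
    rw [real_inner_comm u v]
    field_simp
    rw [hD]; ring
  have fv : f v = β := by
    simp only [f, LinearMap.smul_apply, LinearMap.add_apply, innerₛₗ_apply_apply, smul_eq_mul]
    field_simp
    rw [hD]; ring
  have fs : ∀ s t : ℝ, f (P + s • u + t • v) = f P + (α * s + β * t) := by
    intro s t
    simp only [map_add, map_smul, fu, fv, smul_eq_mul]; ring
  refine (h.union h' ?_).congr ?_ rfl
  · rw [← interior_inter, ← Set.subset_empty_iff]
    have : ∃ w, f w ≠ 0 := by
      rcases hαβ with h0 | h0
      · exact ⟨u, by rwa [fu]⟩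
      · exact ⟨v, by rwa [fv]⟩
    obtain ⟨w, hw⟩ := this
    rw [← interior_level f (f P + r) w hw]
    apply interior_mono
    rintro p ⟨⟨s, t, hA, hp⟩, ⟨s', t', hA', hp'⟩⟩
    have e1 : f p = f P + (α * s + β * t) := by rw [hp]; exact fs s t
    have e2 : f p = f P + (α * s' + β * t') := by rw [hp']; exact fs s' t'
    show f p = f P + r
    linarith [hA.2, hA'.2]
  · ext p
    constructor
    · rintro ⟨s, t, hA, hp⟩
      rcases le_total (α * s + β * t) r with h0 | h0
      · exact Or.inl ⟨s, t, ⟨hA, h0⟩, hp⟩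
      · exact Or.inr ⟨s, t, ⟨hA, h0⟩, hp⟩
    · rintro (⟨s, t, hA, hp⟩ | ⟨s, t, hA, hp⟩)
      · exact ⟨s, t, hA.1, hp⟩
      · exact ⟨s, t, hA.1, hp⟩

lemma reg_congr {P u v : Plane} {A B : ℝ → ℝ → Prop} (h : ∀ s t, A s t ↔ B s t) :
    reg P u v A = reg P u v B := by
  have : A = B := by ext s t; exact h s t
  rw [this]

lemma reg_shift {P u v : Plane} {A B : ℝ → ℝ → Prop} (x y : ℝ)
    (h : ∀ s t, A s t ↔ B (s - x) (t - y)) :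
    reg P u v A = reg (P + x • u + y • v) u v B := by
  ext p
  constructor
  · rintro ⟨s, t, hA, rfl⟩
    exact ⟨s - x, t - y, (h s t).1 hA, by module⟩
  · rintro ⟨s, t, hA, rfl⟩
    exact ⟨s + x, t + y, (h _ _).2 (by simpa using hA), by module⟩

section frames
variable {a b : ℝ} (ha : 0 < a) (hb : 0 < b)

lemma Fr.nd (ha : 0 < a) (hb : 0 < b) {u v : Plane} (h : Fr a b u v) : ND u v := by
  obtain ⟨h1, h2⟩ := h
  unfold ND
  rw [h2]
  have : 0 < a ^ 2 * b ^ 2 := by positivity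
  rcases h1 with ⟨h3, h4⟩ | ⟨h3, h4⟩
  · rw [h3, h4]; nlinarith
  · rw [h3, h4]; nlinarith

lemma Fr.neg {u v : Plane} (h : Fr a b u v) : Fr a b (-u) (-v) := by
  unfold Fr at *
  simpa only [inner_neg_neg] using h

lemma good_one {T : Set Plane} (h : IsTile a b T) : Good a b T 1 :=
  ⟨Unit, inferInstance, fun _ => T, by simp, fun _ => h, by simp [Set.iUnion_const],
    fun i j hij => (hij rfl).elim⟩

lemma good_UT {P u v : Plane} (h : Fr a b u v) : Good a b (reg P u v UT) 1 := by
  apply good_one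
  obtain ⟨⟨h3, h4⟩ | ⟨h3, h4⟩, h2⟩ := h
  · exact ⟨P, u, v, h3, h4, h2, rfl⟩
  · refine ⟨P, v, u, h4, h3, by rw [real_inner_comm]; exact h2, ?_⟩
    ext p
    constructor
    · rintro ⟨s, t, ⟨h5, h6, h7⟩, rfl⟩
      exact ⟨t, s, ⟨h6, h5, by linarith⟩, by module⟩
    · rintro ⟨s, t, ⟨h5, h6, h7⟩, rfl⟩
      exact ⟨t, s, ⟨h6, h5, by linarith⟩, by module⟩

lemma good_sq (ha : 0 < a) (hb : 0 < b) {P u v : Plane} (h : Fr a b u v) :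
    Good a b (reg P u v (fun s t => 0 ≤ s ∧ s ≤ 1 ∧ 0 ≤ t ∧ t ≤ 1)) 2 := by
  refine Good.split (h.nd ha hb) (N := 1) (N' := 1) 1 1 1 (by norm_num)
    ((good_UT h).congr (reg_congr ?_) rfl)
    ((good_UT (P := P + u + v) h.neg).congr ?_ rfl)
  · intro s t
    unfold UT
    constructor
    · rintro ⟨⟨h1, h2, h3, h4⟩, h5⟩
      exact ⟨h1, h3, by linarith⟩
    · rintro ⟨h1, h2, h3⟩
      exact ⟨⟨h1, by linarith, h2, by linarith⟩, by linarith⟩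
  · ext p
    constructor
    · rintro ⟨s, t, ⟨⟨h1, h2, h3, h4⟩, h5⟩, rfl⟩
      exact ⟨1 - s, 1 - t, ⟨by linarith, by linarith, by linarith⟩, by module⟩
    · rintro ⟨s, t, ⟨h1, h2, h3⟩, rfl⟩
      exact ⟨1 - s, 1 - t, ⟨⟨by linarith, by linarith, by linarith, by linarith⟩, by linarith⟩,
        by module⟩

lemma good_col (ha : 0 < a) (hb : 0 < b) {u v : Plane} (h : Fr a b u v) (n : ℕ) : ∀ P : Plane,
    Good a b (reg P u v (fun s t => 0 ≤ s ∧ s ≤ 1 ∧ 0 ≤ t ∧ s + t ≤ n + 1)) (2 * n + 1) := by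
  induction n with
  | zero =>
    intro P
    refine (good_UT h).congr (reg_congr ?_) rfl
    intro s t
    unfold UT
    simp only [Nat.cast_zero, zero_add]
    constructor
    · rintro ⟨h1, h2, h3, h4⟩
      exact ⟨h1, h3, h4⟩
    · rintro ⟨h1, h2, h3⟩
      exact ⟨h1, by linarith, h2, h3⟩
  | succ n ih =>
    intro P
    have hn : (0:ℝ) ≤ n := by positivity
    refine (Good.split (h.nd ha hb) (N := 2) (N' := 2 * n + 1) 0 1 1 (by norm_num)
      ((good_sq ha hb h).congr (reg_congr ?_) rfl)
      ((ih _).congr (reg_shift 0 1 ?_) rfl)).congr rfl (by ring)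
    · intro s t
      push_cast
      constructor
      · rintro ⟨⟨h1, h2, h3, h4⟩, h5⟩
        refine ⟨?_, ?_, ?_, ?_⟩ <;> linarith
      · rintro ⟨h1, h2, h3, h4⟩
        refine ⟨⟨?_, ?_, ?_, ?_⟩, ?_⟩ <;> linarith
    · intro s t
      push_cast
      constructor
      · rintro ⟨⟨h1, h2, h3, h4⟩, h5⟩
        refine ⟨?_, ?_, ?_, ?_⟩ <;> linarith
      · rintro ⟨h1, h2, h3, h4⟩
        refine ⟨⟨?_, ?_, ?_, ?_⟩, ?_⟩ <;> linarith

lemma good_tri (ha : 0 < a) (hb : 0 < b) {u v : Plane} (h : Fr a b u v) (n : ℕ) (hn : 1 ≤ n) :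
    ∀ P : Plane, Good a b (reg P u v (fun s t => 0 ≤ s ∧ 0 ≤ t ∧ s + t ≤ n)) (n ^ 2) := by
  induction n, hn using Nat.le_induction with
  | base =>
    intro P
    refine (good_UT h).congr (reg_congr ?_) rfl
    intro s t
    simp [UT]
  | succ n hn ih =>
    intro P
    have hn : (0:ℝ) ≤ n := by positivity
    refine (Good.split (h.nd ha hb) (N := 2 * n + 1) (N' := n ^ 2) 1 0 1 (by norm_num)
      ((good_col ha hb h n P).congr (reg_congr ?_) rfl)
      ((ih _).congr (reg_shift 1 0 ?_) rfl)).congr rfl (by ring)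
    · intro s t
      push_cast
      constructor
      · rintro ⟨⟨h1, h2, h3⟩, h5⟩
        refine ⟨?_, ?_, ?_, ?_⟩ <;> linarith
      · rintro ⟨h1, h2, h3, h4⟩
        refine ⟨⟨?_, ?_, ?_⟩, ?_⟩ <;> linarith
    · intro s t
      push_cast
      constructor
      · rintro ⟨⟨h1, h2, h3⟩, h5⟩
        refine ⟨?_, ?_, ?_⟩ <;> linarith
      · rintro ⟨h1, h2, h3⟩
        refine ⟨⟨?_, ?_, ?_⟩, ?_⟩ <;> linarith

lemma good_rect (ha : 0 < a) (hb : 0 < b) {u v : Plane} (h : Fr a b u v) (n : ℕ) (hn : 1 ≤ n) :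
    ∀ P : Plane,
      Good a b (reg P u v (fun s t => 0 ≤ s ∧ s ≤ 1 ∧ 0 ≤ t ∧ t ≤ n)) (2 * n) := by
  induction n, hn using Nat.le_induction with
  | base =>
    intro P
    refine (good_sq ha hb h).congr (reg_congr ?_) rfl
    intro s t
    simp
  | succ n hn ih =>
    intro P
    have hn : (0:ℝ) ≤ n := by positivity
    refine (Good.split (h.nd ha hb) (N := 2) (N' := 2 * n) 0 1 1 (by norm_num)
      ((good_sq ha hb h).congr (reg_congr ?_) rfl)
      ((ih _).congr (reg_shift 0 1 ?_) rfl)).congr rfl (by ring)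
    · intro s t
      push_cast
      constructor
      · rintro ⟨⟨h1, h2, h3, h4⟩, h5⟩
        refine ⟨?_, ?_, ?_, ?_⟩ <;> linarith
      · rintro ⟨h1, h2, h3, h4⟩
        refine ⟨⟨?_, ?_, ?_, ?_⟩, ?_⟩ <;> linarith
    · intro s t
      push_cast
      constructor
      · rintro ⟨⟨h1, h2, h3, h4⟩, h5⟩
        refine ⟨?_, ?_, ?_, ?_⟩ <;> linarith
      · rintro ⟨h1, h2, h3, h4⟩
        refine ⟨⟨?_, ?_, ?_, ?_⟩, ?_⟩ <;> linarith

end frames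

lemma convex_reg {P u v : Plane} {A : ℝ → ℝ → Prop}
    (h : ∀ s t s' t' x y : ℝ, A s t → A s' t' → 0 ≤ x → 0 ≤ y → x + y = 1 →
      A (x * s + y * s') (x * t + y * t')) : Convex ℝ (reg P u v A) := by
  rintro _ ⟨s, t, hA, rfl⟩ _ ⟨s', t', hA', rfl⟩ x y hx hy hxy
  refine ⟨_, _, h s t s' t' x y hA hA' hx hy hxy, ?_⟩
  obtain rfl : y = 1 - x := by linarith
  module

lemma reg_UT_hull (P u v : Plane) : reg P u v UT = convexHull ℝ {P + v, P + u, P} := by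
  apply Set.Subset.antisymm
  · rintro _ ⟨s, t, ⟨h1, h2, h3⟩, rfl⟩
    have hc := convex_convexHull ℝ ({P + v, P + u, P} : Set Plane)
    have m1 : P + v ∈ convexHull ℝ ({P + v, P + u, P} : Set Plane) :=
      subset_convexHull ℝ _ (by simp)
    have m2 : P + u ∈ convexHull ℝ ({P + v, P + u, P} : Set Plane) :=
      subset_convexHull ℝ _ (by simp)
    have m3 : P ∈ convexHull ℝ ({P + v, P + u, P} : Set Plane) :=
      subset_convexHull ℝ _ (by simp)
    have := hc.sum_mem (t := Finset.univ) (w := ![t, s, 1 - s - t]) (z := ![P + v, P + u, P])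
      (by intro i _; fin_cases i <;> simp <;> linarith)
      (by simp [Fin.sum_univ_three]; ring)
      (by intro i _; fin_cases i <;> simp [m1, m2, m3])
    convert this using 1
    simp only [Fin.sum_univ_three, Matrix.cons_val_zero, Matrix.cons_val_one, Matrix.cons_val]
    module
  · apply convexHull_min
    · rintro p (rfl | rfl | rfl)
      · exact ⟨0, 1, ⟨by norm_num, by norm_num, by norm_num⟩, by module⟩
      · exact ⟨1, 0, ⟨by norm_num, by norm_num, by norm_num⟩, by module⟩
      · exact ⟨0, 0, ⟨by norm_num, by norm_num, by norm_num⟩, by module⟩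
    · apply convex_reg
      rintro s t s' t' x y ⟨h1, h2, h3⟩ ⟨h4, h5, h6⟩ hx hy hxy
      exact ⟨by positivity, by positivity, by nlinarith⟩

lemma exists_iso {a b : ℝ} (ha : 0 < a) (hb : 0 < b) {T : Set Plane} (hT : IsTile a b T) :
    ∃ f : Plane ≃ᵢ Plane, T = f '' (reg 0 (hx a 0) (hx (-b) b) UT) := by
  obtain ⟨R, u, v, hu, hv, huv, rfl⟩ := hT
  have h3 : Real.sqrt 3 * Real.sqrt 3 = 3 := Real.mul_self_sqrt (by norm_num)
  have h30 : Real.sqrt 3 ≠ 0 := by positivity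
  let L : Plane →ₗ[ℝ] Plane :=
    { toFun := fun p => ((p 0 + p 1 / Real.sqrt 3) / a) • u + (2 * p 1 / Real.sqrt 3 / b) • v
      map_add' := by
        intro p q
        simp only [PiLp.add_apply]
        module
      map_smul' := by
        intro m p
        simp only [PiLp.smul_apply, smul_eq_mul, RingHom.id_apply]
        module }
  have hL : ∀ p, L p = ((p 0 + p 1 / Real.sqrt 3) / a) • u + (2 * p 1 / Real.sqrt 3 / b) • v :=
    fun p => rfl
  have hn : ∀ p, ‖L p‖ = ‖p‖ := by
    intro p
    have e : inner ℝ (L p) (L p) = (inner ℝ p p : ℝ) := by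
      rw [hL]
      simp only [inner_add_left, inner_add_right, real_inner_smul_left, real_inner_smul_right]
      rw [real_inner_comm u v, hu, hv, huv]
      simp only [PiLp.inner_apply, Fin.sum_univ_two, RCLike.inner_apply, conj_trivial]
      have h3' : Real.sqrt 3 ^ 2 = 3 := by rw [pow_two]; exact h3
      field_simp
      ring_nf
      rw [h3']
      ring
    rw [real_inner_self_eq_norm_sq, real_inner_self_eq_norm_sq] at e
    exact (sq_eq_sq₀ (norm_nonneg _) (norm_nonneg _)).1 e
  let LI : Plane →ₗᵢ[ℝ] Plane := ⟨L, hn⟩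
  let LE : Plane ≃ₗᵢ[ℝ] Plane := LI.toLinearIsometryEquiv rfl
  have hLE : ∀ p, LE p = L p := fun p => rfl
  have Lu : L (hx a 0) = u := by
    rw [hL]
    simp [hx]
    rw [div_self ha.ne', one_smul]
  have Lv : L (hx (-b) b) = v := by
    rw [hL]
    have e1 : -b + b / 2 + b * Real.sqrt 3 / 2 / Real.sqrt 3 = 0 := by field_simp; ring
    have e2 : 2 * (b * Real.sqrt 3 / 2) / Real.sqrt 3 / b = 1 := by field_simp
    simp only [hx, pt_0, pt_1, e1, e2]
    simp
  refine ⟨LE.toIsometryEquiv.trans (IsometryEquiv.addLeft R), ?_⟩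
  have key : ∀ s t : ℝ, (LE.toIsometryEquiv.trans (IsometryEquiv.addLeft R))
      (0 + s • hx a 0 + t • hx (-b) b) = R + s • u + t • v := by
    intro s t
    show R + LE (0 + s • hx a 0 + t • hx (-b) b) = _
    rw [hLE]
    simp only [map_add, map_smul, Lu, Lv, map_zero]
    module
  ext p
  constructor
  · rintro ⟨s, t, h, rfl⟩
    exact ⟨_, ⟨s, t, h, rfl⟩, key s t⟩
  · rintro ⟨_, ⟨s, t, h, rfl⟩, rfl⟩
    exact ⟨s, t, h, key s t⟩

lemma dist_of_inner {p q : Plane} {r : ℝ} (hr : 0 ≤ r) (h : inner ℝ (p - q) (p - q) = r ^ 2) :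
    dist p q = r := by
  rw [dist_eq_norm]
  rw [real_inner_self_eq_norm_sq] at h
  exact (sq_eq_sq₀ (norm_nonneg _) hr).1 h

lemma Good.tiles {a b c : ℝ} (ha : 0 < a) (hb : 0 < b) (hc : 0 < c)
    (h : c ^ 2 = a ^ 2 + b ^ 2 + a * b) {S : Set Plane} {N : ℕ} (hS : Good a b S N) :
    TilesInto S N a b c := by
  obtain ⟨ι, _, g, hN, ht, hu, hp⟩ := hS
  choose f hf using fun i => exists_iso ha hb (ht i)
  let e : Fin N ≃ ι := (Fintype.equivFinOfCardEq hN).symm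
  refine ⟨fun i => f (e i), reg 0 (hx a 0) (hx (-b) b) UT, ?_, ?_, ?_⟩
  · refine ⟨_, _, _, ?_, ?_, ?_, reg_UT_hull _ _ _⟩
    · apply dist_of_inner ha.le
      simp only [zero_add, sub_zero, inner_hx]; ring
    · apply dist_of_inner hb.le
      simp only [zero_add, sub_zero, inner_hx]; ring
    · apply dist_of_inner hc.le
      simp only [zero_add, inner_sub_left, inner_sub_right, inner_hx]; rw [h]; ring
  · rw [hu]
    simp only [← hf]
    exact (e.surjective.iUnion_comp g).symm
  · intro i j hij
    simp only [← hf]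
    exact hp _ _ (fun h => hij (e.injective h))

/-- Region in hexagonal coordinates. -/
def hreg (A : ℝ → ℝ → Prop) : Set Plane := reg (hx 0 0) (hx 1 0) (hx 0 1) A

lemma nd_hex : ND (hx 1 0) (hx 0 1) := by
  unfold ND
  simp only [inner_hx]; norm_num

lemma mem_hreg {A : ℝ → ℝ → Prop} {p : Plane} : p ∈ hreg A ↔ ∃ X Y, A X Y ∧ p = hx X Y := by
  unfold hreg reg
  simp [hx_comb]

lemma hreg_eq {A B : ℝ → ℝ → Prop} {p q u1 u2 v1 v2 : ℝ} (σ τ : ℝ → ℝ → ℝ)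
    (h1 : ∀ X Y, A X Y → B (σ X Y) (τ X Y) )
    (h2 : ∀ X Y, X = p + σ X Y * u1 + τ X Y * v1 ∧ Y = q + σ X Y * u2 + τ X Y * v2)
    (h3 : ∀ s t, B s t → A (p + s * u1 + t * v1) (q + s * u2 + t * v2)) :
    hreg A = reg (hx p q) (hx u1 u2) (hx v1 v2) B := by
  ext z
  rw [mem_hreg]
  constructor
  · rintro ⟨X, Y, hA, rfl⟩
    refine ⟨_, _, h1 X Y hA, ?_⟩
    rw [hx_comb, ← (h2 X Y).1, ← (h2 X Y).2]
  · rintro ⟨s, t, hB, rfl⟩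
    exact ⟨_, _, h3 s t hB, hx_comb ..⟩

/-- trapezoid in hex coordinates -/
def Tz (X0 Y0 x l : ℝ) (X Y : ℝ) : Prop := X0 ≤ X ∧ Y0 ≤ Y ∧ Y ≤ Y0 + l ∧ X + Y ≤ X0 + Y0 + x + l

lemma trap_eq {x l : ℝ} (hx0 : 0 ≤ x) (hl : 0 < l) : IdealTrapezoid x l = hreg (Tz 0 0 x l) := by
  unfold IdealTrapezoid
  have p1 : pt 0 0 = hx 0 0 := by simp [hx]
  have p2 : pt (x + l) 0 = hx (x + l) 0 := by simp [hx]
  have p3 : pt (x + l / 2) (l * Real.sqrt 3 / 2) = hx x l := by simp [hx]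
  have p4 : pt (l / 2) (l * Real.sqrt 3 / 2) = hx 0 l := by simp [hx]
  rw [p1, p2, p3, p4]
  apply Set.Subset.antisymm
  · apply convexHull_min
    · rintro p (rfl | rfl | rfl | rfl) <;> rw [mem_hreg] <;>
        refine ⟨_, _, ⟨?_, ?_, ?_, ?_⟩, rfl⟩ <;> linarith
    · apply convex_reg
      rintro s t s' t' y z ⟨h1, h2, h3, h4⟩ ⟨h5, h6, h7, h8⟩ hy hz hyz
      obtain rfl : z = 1 - y := by linarith
      refine ⟨by positivity, by positivity, by nlinarith, by nlinarith⟩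
  · intro p hp
    rw [mem_hreg] at hp
    obtain ⟨X, Y, ⟨h1, h2, h3, h4⟩, rfl⟩ := hp
    set H := convexHull ℝ {hx 0 0, hx (x + l) 0, hx x l, hx 0 l} with hH
    have hc : Convex ℝ H := convex_convexHull ℝ _
    have m1 : hx 0 0 ∈ H := subset_convexHull ℝ _ (by simp)
    have m2 : hx (x + l) 0 ∈ H := subset_convexHull ℝ _ (by simp)
    have m3 : hx x l ∈ H := subset_convexHull ℝ _ (by simp)
    have m4 : hx 0 l ∈ H := subset_convexHull ℝ _ (by simp)
    have cmb : ∀ s t u1 u2 v1 v2 : ℝ, s • hx u1 u2 + t • hx v1 v2 =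
        hx (s * u1 + t * v1) (s * u2 + t * v2) := by
      intro s t u1 u2 v1 v2
      have := hx_comb 0 0 s u1 u2 t v1 v2
      have h0 : hx 0 0 = 0 := by apply pt_ext <;> simp [hx]
      simpa [h0] using this
    have hy1 : 0 ≤ 1 - Y / l := by
      rw [sub_nonneg, div_le_one hl]; linarith
    have hy0 : 0 ≤ Y / l := by positivity
    have n1 : hx 0 Y ∈ H := by
      have := hc m1 m4 hy1 hy0 (by ring)
      rw [cmb] at this
      convert this using 2 <;> field_simp <;> ring
    have n2 : hx (x + l - Y) Y ∈ H := by
      have := hc m2 m3 hy1 hy0 (by ring)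
      rw [cmb] at this
      convert this using 2 <;> field_simp <;> ring
    rcases (show 0 ≤ x + l - Y by linarith).eq_or_lt with h0 | h0
    · have : X = 0 := by linarith
      rw [this]; exact n1
    · have := hc n1 n2 (a := 1 - X / (x + l - Y)) (b := X / (x + l - Y))
        (by rw [sub_nonneg, div_le_one h0]; linarith) (by positivity) (by ring)
      rw [cmb] at this
      convert this using 2 <;> field_simp <;> ring

lemma good_core {a b c : ℕ} (ha : 0 < a) (hb : 0 < b) (hc : 0 < c)
    (h : c ^ 2 = a ^ 2 + b ^ 2 + a * b) (X0 Y0 : ℝ) :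
    Good a b (hreg (Tz X0 Y0 ((a:ℝ) ^ 2 + (b:ℝ) ^ 2) (a * b))) (2 * (a ^ 2 + b ^ 2) + a * b) := by
  have hA : (0:ℝ) < a := by exact_mod_cast ha
  have hB : (0:ℝ) < b := by exact_mod_cast hb
  have hC : (0:ℝ) < c := by exact_mod_cast hc
  have hR : (c:ℝ) ^ 2 = (a:ℝ) ^ 2 + (b:ℝ) ^ 2 + a * b := by exact_mod_cast h
  have f1 : Fr a b (hx a 0) (hx 0 (-b)) := by
    refine ⟨Or.inl ⟨?_, ?_⟩, ?_⟩ <;> rw [inner_hx] <;> ring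
  have f2 : Fr a b (hx (-b) 0) (hx a (-a)) := by
    refine ⟨Or.inr ⟨?_, ?_⟩, ?_⟩ <;> rw [inner_hx] <;> ring
  have f3 : Fr a b (hx (-((a:ℝ) ^ 2 / c)) (-(a * b / c)))
      (hx (b * (a + b) / c) (-(a * b / c))) := by
    refine ⟨Or.inl ⟨?_, ?_⟩, ?_⟩ <;> rw [inner_hx] <;> field_simp
    · rw [hR]; ring
    · rw [hR]; ring
    · rw [hR]; ring
  have g1 := good_tri hA hB f1 a ha (hx X0 (Y0 + a * b))
  have g2 := good_tri hA hB f2 b hb (hx (X0 + (a:ℝ) ^ 2 + (b:ℝ) ^ 2) (Y0 + a * b))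
  have g3 := good_tri hA hB f3 c hc (hx (X0 + (a:ℝ) ^ 2) (Y0 + a * b))
  set A : ℝ := (a : ℝ)
  set B : ℝ := (b : ℝ)
  set C : ℝ := (c : ℝ)
  refine (Good.split nd_hex B (-A) (B * X0 - A * Y0) (Or.inl hB.ne')
    (g1.congr ?_ rfl) (Good.split nd_hex A (A + B) (A * C ^ 2 + A * X0 + (A + B) * Y0)
      (Or.inl hA.ne') (g3.congr ?_ rfl) (g2.congr ?_ rfl))).congr rfl (by rw [h]; ring)
  · refine hreg_eq (fun X Y => (X - X0) / A) (fun X Y => (Y0 + A * B - Y) / B) ?_ ?_ ?_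
    · rintro X Y ⟨⟨h1, h2, h3, h4⟩, h5⟩
      refine ⟨div_nonneg (by linarith) hA.le, div_nonneg (by linarith) hB.le, ?_⟩
      rw [div_add_div _ _ hA.ne' hB.ne', div_le_iff₀ (by positivity)]
      nlinarith
    · intro X Y
      constructor <;> field_simp <;> ring
    · rintro s t ⟨h1, h2, h3⟩
      have e1 : 0 ≤ s * A := by positivity
      have e2 : 0 ≤ t * B := by positivity
      have e3 : s * A + t * A ≤ A * A := by nlinarith
      have e4 : s * B + t * B ≤ A * B := by nlinarith
      have e5 : 0 ≤ s * B := by positivity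
      have e6 : 0 ≤ t * A := by positivity
      have e7 : A * B * s + A * B * t ≤ A * B * A := by
        have := mul_le_mul_of_nonneg_left h3 (by positivity : 0 ≤ A * B); linarith
      refine ⟨⟨?_, ?_, ?_, ?_⟩, ?_⟩ <;> nlinarith
  · refine hreg_eq (fun X Y => (A * C ^ 2 - A * (X - X0) - (A + B) * (Y - Y0)) / (A * C))
      (fun X Y => (B * (X - X0) - A * (Y - Y0)) / (B * C)) ?_ ?_ ?_
    · rintro X Y ⟨⟨⟨h1, h2, h3, h4⟩, h5⟩, h6⟩
      refine ⟨div_nonneg (by linarith) (by positivity),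
        div_nonneg (by linarith) (by positivity), ?_⟩
      rw [div_add_div _ _ (by positivity) (by positivity), div_le_iff₀ (by positivity)]
      have : 0 ≤ C * C ^ 2 * (Y - Y0) := mul_nonneg (by positivity) (by linarith)
      rw [hR] at this
      linarith
    · intro X Y
      constructor
      · field_simp
        rw [hR]; ring
      · field_simp
        rw [hR]; ring
    · rintro s t ⟨h1, h2, h3⟩
      have eY : Y0 + A * B + s * -(A * B / C) + t * -(A * B / C) =
        Y0 + A * B * (C - s - t) / C := by field_simp; ring
      have eX : X0 + A ^ 2 + s * -(A ^ 2 / C) + t * (B * (A + B) / C) =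
        X0 + (A ^ 2 * (C - s - t) + C ^ 2 * t) / C := by rw [hR]; field_simp; ring
      rw [eY, eX]
      have hw : 0 ≤ C - s - t := by linarith
      obtain ⟨w, hw'⟩ : ∃ w, w = C - s - t := ⟨_, rfl⟩
      rw [← hw'] at hw ⊢
      have hC' : C = s + t + w := by linarith
      have y0 : 0 ≤ A * B * w / C := by positivity
      have x0 : 0 ≤ (A ^ 2 * w + C ^ 2 * t) / C := by positivity
      have y1 : A * B * w / C ≤ A * B := by
        rw [div_le_iff₀ hC]
        exact mul_le_mul_of_nonneg_left (by linarith) (by positivity)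
      have xy : (A ^ 2 * w + C ^ 2 * t) / C + A * B * w / C ≤ C ^ 2 := by
        rw [← add_div, div_le_iff₀ hC]
        have k1 : C ^ 2 * w + C ^ 2 * t ≤ C ^ 2 * C := by
          have := mul_nonneg (sq_nonneg C) h1
          nlinarith
        have k2 : 0 ≤ B ^ 2 * w := by positivity
        have k3 : C ^ 2 * w = (A ^ 2 + B ^ 2 + A * B) * w := by rw [hR]
        linarith
      have l1 : B * ((A ^ 2 * w + C ^ 2 * t) / C) - A * (A * B * w / C) = B * C * t := by
        field_simp; ring
      have l2 : A * ((A ^ 2 * w + C ^ 2 * t) / C) + (A + B) * (A * B * w / C) =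
          A * C * (w + t) := by
        have : A * (A ^ 2 * w + C ^ 2 * t) + (A + B) * (A * B * w) = A * C ^ 2 * (w + t) := by
          rw [hR]; ring
        rw [← mul_div_assoc, ← mul_div_assoc, ← add_div, this]; field_simp
      have l3 : 0 ≤ B * C * t := by positivity
      have l4 : A * C * (w + t) ≤ A * C ^ 2 := by
        have : A * C * (w + t) ≤ A * C * C :=
          mul_le_mul_of_nonneg_left (by linarith) (by positivity)
        linarith
      refine ⟨⟨⟨?_, ?_, ?_, ?_⟩, ?_⟩, ?_⟩
      · linarith
      · linarith
      · linarith
      · linarith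
      · linarith
      · linarith
  · refine hreg_eq (fun X Y => (C ^ 2 + X0 + Y0 - X - Y) / B)
      (fun X Y => (Y0 + A * B - Y) / A) ?_ ?_ ?_
    · rintro X Y ⟨⟨⟨h1, h2, h3, h4⟩, h5⟩, h6⟩
      refine ⟨div_nonneg (by linarith) hB.le, div_nonneg (by linarith) hA.le, ?_⟩
      rw [div_add_div _ _ hB.ne' hA.ne', div_le_iff₀ (by positivity)]
      nlinarith
    · intro X Y
      constructor
      · rw [hR]; field_simp; ring
      · field_simp; ring
    · rintro s t ⟨h1, h2, h3⟩
      have e1 : 0 ≤ s * B := by positivity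
      have e2 : 0 ≤ t * A := by positivity
      have e3 : s * B + t * B ≤ B * B := by nlinarith
      have e4 : s * A + t * A ≤ A * B := by nlinarith
      have e5 : 0 ≤ s * A := by positivity
      have e6 : A * B * s + A * B * t ≤ A * B * B := by
        have := mul_le_mul_of_nonneg_left h3 (by positivity : 0 ≤ A * B); linarith
      have e7 : B * (s * B + t * B) ≤ B * (B * B) := mul_le_mul_of_nonneg_left e3 hB.le
      have e8 : 0 ≤ t * (A ^ 2 + A * B + B ^ 2) := by positivity
      have e9 : 0 ≤ B * (t * A) := by positivity
      refine ⟨⟨⟨?_, ?_, ?_, ?_⟩, ?_⟩, ?_⟩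
      · nlinarith
      · linarith
      · linarith
      · linarith
      · have : 0 ≤ A * (t * A) := by positivity
        have : 0 ≤ B * (t * B) := by positivity
        have : 0 ≤ A * (A * A) := by positivity
        nlinarith
      · rw [hR]; nlinarith

lemma good_strip {a b : ℕ} (ha : 0 < a) (hb : 0 < b) (X0 Y0 : ℝ) :
    Good a b (hreg (fun X Y => X0 ≤ X ∧ X ≤ X0 + a ∧ Y0 ≤ Y ∧ Y ≤ Y0 + a * b)) (2 * a) := by
  have hA : (0:ℝ) < a := by exact_mod_cast ha
  have hB : (0:ℝ) < b := by exact_mod_cast hb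
  have f1 : Fr a b (hx (-a) 0) (hx 0 b) := by
    refine ⟨Or.inl ⟨?_, ?_⟩, ?_⟩ <;> rw [inner_hx] <;> ring
  refine (good_rect hA hB f1 a ha (hx (X0 + a) Y0)).congr ?_ rfl
  refine hreg_eq (fun X Y => (X0 + a - X) / a) (fun X Y => (Y - Y0) / b) ?_ ?_ ?_
  · rintro X Y ⟨h1, h2, h3, h4⟩
    refine ⟨div_nonneg (by linarith) hA.le, ?_, div_nonneg (by linarith) hB.le, ?_⟩
    · rw [div_le_one hA]; linarith
    · rw [div_le_iff₀ hB]; linarith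
  · intro X Y
    constructor <;> field_simp <;> ring
  · rintro s t ⟨h1, h2, h3, h4⟩
    refine ⟨?_, ?_, ?_, ?_⟩ <;> nlinarith

lemma Good.symm {a b : ℝ} {S : Set Plane} {N : ℕ} (h : Good a b S N) : Good b a S N := by
  obtain ⟨ι, i1, g, hN, ht, hu, hp⟩ := h
  refine ⟨ι, i1, g, hN, ?_, hu, hp⟩
  intro i
  obtain ⟨R, u, v, h1, h2, h3, h4⟩ := ht i
  refine ⟨R, v, u, h2, h1, by rw [real_inner_comm, h3]; ring, ?_⟩
  rw [h4]
  ext p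
  constructor
  · rintro ⟨s, t, ⟨h5, h6, h7⟩, rfl⟩
    exact ⟨t, s, ⟨h6, h5, by linarith⟩, by module⟩
  · rintro ⟨s, t, ⟨h5, h6, h7⟩, rfl⟩
    exact ⟨t, s, ⟨h6, h5, by linarith⟩, by module⟩

lemma good_ext {a b : ℝ} {X0 Y0 x l w : ℝ} {N M : ℕ} (hx0 : 0 ≤ x) (hw : 0 ≤ w)
    (h1 : Good a b (hreg (fun X Y => X0 ≤ X ∧ X ≤ X0 + w ∧ Y0 ≤ Y ∧ Y ≤ Y0 + l)) M)
    (h2 : Good a b (hreg (Tz (X0 + w) Y0 x l)) N) :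
    Good a b (hreg (Tz X0 Y0 (x + w) l)) (M + N) := by
  refine Good.split nd_hex 1 0 (X0 + w) (by norm_num)
    (h1.congr (reg_congr ?_) rfl) (h2.congr (reg_congr ?_) rfl)
  · intro X Y
    constructor
    · rintro ⟨⟨h1, h2, h3, h4⟩, h5⟩
      refine ⟨?_, ?_, ?_, ?_⟩ <;> linarith
    · rintro ⟨h1, h2, h3, h4⟩
      refine ⟨⟨?_, ?_, ?_, ?_⟩, ?_⟩ <;> linarith
  · intro X Y
    constructor
    · rintro ⟨⟨h1, h2, h3, h4⟩, h5⟩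
      refine ⟨?_, ?_, ?_, ?_⟩ <;> linarith
    · rintro ⟨h1, h2, h3, h4⟩
      refine ⟨⟨?_, ?_, ?_, ?_⟩, ?_⟩ <;> linarith

lemma good_row {a b c : ℕ} (ha : 0 < a) (hb : 0 < b) (hc : 0 < c)
    (h : c ^ 2 = a ^ 2 + b ^ 2 + a * b) (p q : ℕ) : ∀ X0 Y0 : ℝ,
    Good a b (hreg (Tz X0 Y0 ((a:ℝ) ^ 2 + (b:ℝ) ^ 2 + p * a + q * b) (a * b)))
      (2 * (a ^ 2 + b ^ 2 + p * a + q * b) + a * b) := by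
  induction p with
  | zero =>
    induction q with
    | zero =>
      intro X0 Y0
      simpa using good_core ha hb hc h X0 Y0
    | succ q ih =>
      intro X0 Y0
      have := good_ext (w := b) (M := 2 * b) (by positivity) (by positivity)
        ((good_strip hb ha X0 Y0).symm.congr (by rw [mul_comm (a:ℝ)]) rfl) (ih (X0 + b) Y0)
      refine this.congr ?_ (by ring)
      congr 2
      push_cast; ring
  | succ p ih =>
    intro X0 Y0
    have := good_ext (w := a) (M := 2 * a) (by positivity) (by positivity)
      (good_strip ha hb X0 Y0) (ih (X0 + a) Y0)
    refine this.congr ?_ (by ring)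
    congr 2
    push_cast; ring

lemma good_stack {a b : ℕ} (m : ℕ)
    (hrow : ∀ x : ℕ, m ≤ x → ∀ X0 Y0 : ℝ, Good a b (hreg (Tz X0 Y0 x (a * b))) (2 * x + a * b))
    (k : ℕ) (hk : 1 ≤ k) (x : ℕ) (hx0 : m ≤ x) : ∀ X0 Y0 : ℝ,
    Good a b (hreg (Tz X0 Y0 x (k * a * b))) (k * (2 * x + k * a * b)) := by
  induction k, hk using Nat.le_induction with
  | base =>
    intro X0 Y0
    simpa using hrow x hx0 X0 Y0
  | succ k hk ih =>
    intro X0 Y0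
    have g1 := hrow (x + k * a * b) (by omega) X0 Y0
    have g2 := ih X0 (Y0 + a * b)
    have p1 : (0:ℝ) ≤ a * b := by positivity
    have p2 : (0:ℝ) ≤ k * a * b := by positivity
    have p3 : (0:ℝ) ≤ x := by positivity
    refine (Good.split nd_hex 0 1 (Y0 + a * b) (by norm_num)
      (g1.congr (reg_congr ?_) rfl) (g2.congr (reg_congr ?_) rfl)).congr rfl (by ring)
    · intro X Y
      push_cast
      constructor
      · rintro ⟨⟨h1, h2, h3, h4⟩, h5⟩
        refine ⟨?_, ?_, ?_, ?_⟩ <;> linarith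
      · rintro ⟨h1, h2, h3, h4⟩
        refine ⟨⟨?_, ?_, ?_, ?_⟩, ?_⟩ <;> linarith
    · intro X Y
      push_cast
      constructor
      · rintro ⟨⟨h1, h2, h3, h4⟩, h5⟩
        refine ⟨?_, ?_, ?_, ?_⟩ <;> linarith
      · rintro ⟨h1, h2, h3, h4⟩
        refine ⟨⟨?_, ?_, ?_, ?_⟩, ?_⟩ <;> linarith

theorem stmt2 (a b c : ℕ) (ha : 0 < a) (hb : 0 < b) (hc : 0 < c)
    (hab : Nat.Coprime a b) (hac : Nat.Coprime a c) (hbc : Nat.Coprime b c)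
    (h : c ^ 2 = a ^ 2 + b ^ 2 + a * b)
    (k : ℕ) (hk : 0 < k) (x : ℤ) (hx : (c : ℤ) ^ 2 - a - b < x) :
    TilesInto (IdealTrapezoid (x : ℝ) ((k : ℝ) * a * b))
      ((k * (2 * x + k * a * b)).toNat) a b c := by
  have hA : (0:ℝ) < a := by exact_mod_cast ha
  have hB : (0:ℝ) < b := by exact_mod_cast hb
  have hC : (0:ℝ) < c := by exact_mod_cast hc
  have hR : (c:ℝ) ^ 2 = (a:ℝ) ^ 2 + (b:ℝ) ^ 2 + a * b := by exact_mod_cast h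
  have hZ : (c:ℤ) ^ 2 = (a:ℤ) ^ 2 + (b:ℤ) ^ 2 + a * b := by exact_mod_cast h
  have haZ : (0:ℤ) < a := by exact_mod_cast ha
  have hbZ : (0:ℤ) < b := by exact_mod_cast hb
  have hpred : (((a - 1) * (b - 1) : ℕ) : ℤ) = (a - 1) * (b - 1) := by
    rw [Nat.cast_mul, Nat.cast_sub ha, Nat.cast_sub hb]; simp
  have hx1 : ((a ^ 2 + b ^ 2 + (a - 1) * (b - 1) : ℕ) : ℤ) ≤ x := by
    rw [Nat.cast_add, hpred]; push_cast; nlinarith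
  obtain ⟨n, rfl⟩ : ∃ n : ℕ, x = n := ⟨x.toNat, by omega⟩
  have hn : a ^ 2 + b ^ 2 + (a - 1) * (b - 1) ≤ n := by exact_mod_cast hx1
  have hrow : ∀ x : ℕ, a ^ 2 + b ^ 2 + (a - 1) * (b - 1) ≤ x → ∀ X0 Y0 : ℝ,
      Good a b (hreg (Tz X0 Y0 x (a * b))) (2 * x + a * b) := by
    intro y hy X0 Y0
    obtain ⟨z, rfl⟩ := Nat.exists_eq_add_of_le (show a ^ 2 + b ^ 2 ≤ y by omega)
    obtain ⟨p, q, hpq⟩ := Nat.exists_add_mul_eq_of_gcd_dvd_of_mul_pred_le a b z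
      (by rw [hab]; exact one_dvd _) (by simpa using Nat.le_of_add_le_add_left hy)
    refine (good_row ha hb hc h p q X0 Y0).congr ?_ ?_
    · congr 2
      rw [← hpq]; push_cast; ring
    · rw [← hpq]; ring
  have hN : ((k:ℤ) * (2 * (n:ℤ) + k * a * b)).toNat = k * (2 * n + k * a * b) := by
    have : ((k:ℤ) * (2 * (n:ℤ) + k * a * b)) = ((k * (2 * n + k * a * b) : ℕ) : ℤ) := by
      push_cast; ring
    rw [this, Int.toNat_natCast]
  rw [hN, Int.cast_natCast]
  refine Good.tiles hA hB hC hR ((good_stack _ hrow k hk n hn 0 0).congr ?_ rfl)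
  exact trap_eq (by positivity) (by positivity)
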